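/- Assume that for all a, b ∈ ℝ one has Λ([0, x+a]) − Λ([−x+b, 0]) = O(x/log²x) as x → ∞, and define S_Λ(z) = lim_{c→∞} Σ_{λ ∈ L ∩ [−c,c]} γ_λ/(λ − z) for z ∈ ℂ∖L. Then for every pair {λ₁, λ₂} of consecutive points of L with λ₁ < λ₂ (i.e. λ₁, λ₂ ∈ L and L ∩ (λ₁, λ₂) = ∅), the restriction of S_Λ to the open interval (λ₁, λ₂) is a strictly increasing bijection from (λ₁, λ₂) onto ℝ. -/

import Mathlib

open Filter Set Asymptotics Topology

/-!
On an interval that contains no pole, each term `w / (l - t)` with `w ≥ 0` is monotone in `t`.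
The symmetric limit may converge only conditionally, but the increments `w / (l - t) - w / (l - s)`
with `s ≤ t` are nonnegative, so their series converges unconditionally, and the increments within
`[a, b]` are dominated by those from `a` to `b`. The Weierstrass M-test then makes the limit
continuous. An increment of the limit is at least that of any single term; the terms at the two
endpoints of the gap therefore force strict monotonicity and the limits `-∞` and `+∞` there, and
the intermediate value theorem gives surjectivity.
-/

section MonotoneTerms

variable {ι α : Type*} {𝓛 : SummationFilter ι} [𝓛.NeBot] [𝓛.LeAtTop]

lemma hasSum_unconditional_of_nonneg {u : ι → ℝ} {a : ℝ} (hu : ∀ i, 0 ≤ u i)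
    (h : HasSum u a 𝓛) : HasSum u a := by
  have hsum : Summable u := summable_of_sum_le hu fun s => sum_le_hasSum s (fun i _ => hu i) h
  have hlim : HasSum u (∑' i, u i) 𝓛 := hsum.hasSum.mono_left 𝓛.le_atTop
  exact h.unique hlim ▸ hsum.hasSum

section Preorder

variable [Preorder α] {g : ι → α → ℝ} {f : α → ℝ} {s : Set α}

lemma sub_le_sub_of_hasSum_of_monotoneOn (hg : ∀ i, MonotoneOn (g i) s)
    (hf : ∀ x ∈ s, HasSum (fun i => g i x) (f x) 𝓛) (i : ι) {x y : α} (hx : x ∈ s) (hy : y ∈ s)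
    (hxy : x ≤ y) : g i y - g i x ≤ f y - f x :=
  le_hasSum ((hf y hy).sub (hf x hx)) i fun j _ => sub_nonneg.2 (hg j hx hy hxy)

lemma strictMonoOn_of_hasSum_of_monotoneOn (hg : ∀ i, MonotoneOn (g i) s)
    (hf : ∀ x ∈ s, HasSum (fun i => g i x) (f x) 𝓛) {i : ι} (hi : StrictMonoOn (g i) s) :
    StrictMonoOn f s := fun _ hx _ hy hxy =>
  sub_pos.1 <| (sub_pos.2 (hi hx hy hxy)).trans_le
    (sub_le_sub_of_hasSum_of_monotoneOn hg hf i hx hy hxy.le)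

lemma continuousOn_Icc_of_hasSum_of_monotoneOn [TopologicalSpace α] {a b : α}
    (hg : ∀ i, MonotoneOn (g i) (Icc a b)) (hcont : ∀ i, ContinuousOn (g i) (Icc a b))
    (hf : ∀ x ∈ Icc a b, HasSum (fun i => g i x) (f x) 𝓛) : ContinuousOn f (Icc a b) := by
  intro x hx
  have ha : a ∈ Icc a b := left_mem_Icc.2 (hx.1.trans hx.2)
  have hb : b ∈ Icc a b := right_mem_Icc.2 (hx.1.trans hx.2)
  have hincr : ∀ y ∈ Icc a b, HasSum (fun i => g i y - g i a) (f y - f a) := fun y hy =>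
    hasSum_unconditional_of_nonneg (fun i => sub_nonneg.2 (hg i ha hy hy.1))
      ((hf y hy).sub (hf a ha))
  have hbound : ∀ i, ∀ y ∈ Icc a b, ‖g i y - g i a‖ ≤ g i b - g i a := fun i y hy => by
    rw [Real.norm_of_nonneg (sub_nonneg.2 (hg i ha hy hy.1))]
    exact sub_le_sub_right (hg i hy hb hy.2) _
  have htsum : ContinuousOn (fun y => ∑' i, (g i y - g i a)) (Icc a b) :=
    continuousOn_tsum (fun i => (hcont i).sub continuousOn_const) (hincr b hb).summable hbound
  refine (htsum.add_const (f a)).congr (fun y hy => ?_) x hx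
  simp only [(hincr y hy).tsum_eq, sub_add_cancel]

end Preorder

lemma continuousOn_of_isOpen_of_hasSum_of_monotoneOn [LinearOrder α] [TopologicalSpace α]
    [OrderTopology α] {g : ι → α → ℝ} {f : α → ℝ} {s : Set α} (hs : IsOpen s)
    (hg : ∀ i, MonotoneOn (g i) s) (hcont : ∀ i, ContinuousOn (g i) s)
    (hf : ∀ x ∈ s, HasSum (fun i => g i x) (f x) 𝓛) : ContinuousOn f s := by
  intro x hx
  obtain ⟨a, b, -, hnhds, hsub⟩ := exists_Icc_mem_subset_of_mem_nhds (hs.mem_nhds hx)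
  exact ((continuousOn_Icc_of_hasSum_of_monotoneOn (fun i => (hg i).mono hsub)
    (fun i => (hcont i).mono hsub) fun y hy => hf y (hsub hy)).continuousAt
      hnhds).continuousWithinAt

end MonotoneTerms

section Pole

variable {w l : ℝ} {s : Set ℝ}

lemma strictMonoOn_div_const_sub [s.OrdConnected] (hw : 0 < w) (hl : l ∉ s) :
    StrictMonoOn (fun t => w / (l - t)) s := by
  intro t₁ h₁ t₂ h₂ hlt
  have hpos : 0 < (l - t₁) * (l - t₂) := by
    rcases lt_or_ge l t₁ with h | h
    · exact mul_pos_of_neg_of_neg (sub_neg.2 h) (sub_neg.2 (h.trans hlt))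
    · have hl₂ : t₂ < l := not_le.1 fun h' => hl (Set.Icc_subset s h₁ h₂ ⟨h, h'⟩)
      exact mul_pos (sub_pos.2 (hlt.trans hl₂)) (sub_pos.2 hl₂)
  have hincr : w / (l - t₂) - w / (l - t₁) = w * (t₂ - t₁) / ((l - t₁) * (l - t₂)) := by
    have h₁' : l - t₁ ≠ 0 := left_ne_zero_of_mul hpos.ne'
    have h₂' : l - t₂ ≠ 0 := right_ne_zero_of_mul hpos.ne'
    field_simp
    ring
  exact sub_pos.1 (hincr ▸ div_pos (mul_pos hw (sub_pos.2 hlt)) hpos)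

lemma monotoneOn_div_const_sub [s.OrdConnected] (hw : 0 ≤ w) (hl : l ∉ s) :
    MonotoneOn (fun t => w / (l - t)) s := by
  rcases hw.eq_or_lt with rfl | hw
  · simpa only [zero_div] using monotoneOn_const
  · exact (strictMonoOn_div_const_sub hw hl).monotoneOn

lemma continuousOn_div_const_sub (w : ℝ) (hl : l ∉ s) :
    ContinuousOn (fun t => w / (l - t)) s :=
  continuousOn_const.div (continuousOn_const.sub continuousOn_id) fun _ ht =>
    sub_ne_zero.2 (ne_of_mem_of_not_mem ht hl).symm

lemma tendsto_div_const_sub_nhdsLT_atTop (hw : 0 < w) (l : ℝ) :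
    Tendsto (fun t => w / (l - t)) (𝓝[<] l) atTop := by
  have hsub : Tendsto (fun t => l - t) (𝓝[<] l) (𝓝[>] 0) :=
    tendsto_nhdsWithin_iff.2
      ⟨((continuous_const.sub continuous_id).tendsto' l 0 (sub_self l)).mono_left
        nhdsWithin_le_nhds, eventually_mem_nhdsWithin.mono fun _ ht => sub_pos.2 (mem_Iio.1 ht)⟩
  simpa only [div_eq_mul_inv, Function.comp_apply] using
    (tendsto_inv_nhdsGT_zero.comp hsub).const_mul_atTop hw

lemma tendsto_div_const_sub_nhdsGT_atBot (hw : 0 < w) (l : ℝ) :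
    Tendsto (fun t => w / (l - t)) (𝓝[>] l) atBot := by
  have hsub : Tendsto (fun t => l - t) (𝓝[>] l) (𝓝[<] 0) :=
    tendsto_nhdsWithin_iff.2
      ⟨((continuous_const.sub continuous_id).tendsto' l 0 (sub_self l)).mono_left
        nhdsWithin_le_nhds, eventually_mem_nhdsWithin.mono fun _ ht => sub_neg.2 (mem_Ioi.1 ht)⟩
  simpa only [div_eq_mul_inv, Function.comp_apply] using
    (tendsto_inv_nhdsLT_zero.comp hsub).const_mul_atBot hw

end Pole

section SumOfPoles

variable {ι : Type*} {𝓛 : SummationFilter ι} [𝓛.NeBot] [𝓛.LeAtTop] {x w : ι → ℝ} {f : ℝ → ℝ}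

lemma strictMonoOn_of_hasSum_div_sub {s : Set ℝ} [s.OrdConnected] (hw : ∀ k, 0 ≤ w k)
    (hx : ∀ k, x k ∉ s) (hf : ∀ t ∈ s, HasSum (fun k => w k / (x k - t)) (f t) 𝓛) {i : ι}
    (hi : 0 < w i) : StrictMonoOn f s :=
  strictMonoOn_of_hasSum_of_monotoneOn (fun k => monotoneOn_div_const_sub (hw k) (hx k)) hf
    (strictMonoOn_div_const_sub hi (hx i))

lemma continuousOn_of_hasSum_div_sub {s : Set ℝ} [s.OrdConnected] (hs : IsOpen s)
    (hw : ∀ k, 0 ≤ w k) (hx : ∀ k, x k ∉ s)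
    (hf : ∀ t ∈ s, HasSum (fun k => w k / (x k - t)) (f t) 𝓛) : ContinuousOn f s :=
  continuousOn_of_isOpen_of_hasSum_of_monotoneOn hs
    (fun k => monotoneOn_div_const_sub (hw k) (hx k))
    (fun k => continuousOn_div_const_sub (w k) (hx k)) hf

lemma tendsto_nhdsLT_atTop_of_hasSum_div_sub (hw : ∀ k, 0 ≤ w k) {j : ι} (hj : 0 < w j)
    {p : ℝ} (hp : p < x j) (hx : ∀ k, x k ∉ Ioo p (x j))
    (hf : ∀ t ∈ Ioo p (x j), HasSum (fun k => w k / (x k - t)) (f t) 𝓛) :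
    Tendsto f (𝓝[<] x j) atTop := by
  obtain ⟨m, hm⟩ := nonempty_Ioo.2 hp
  refine tendsto_atTop_mono' _ ?_
    (tendsto_atTop_add_const_right _ (f m - w j / (x j - m))
      (tendsto_div_const_sub_nhdsLT_atTop hj _))
  filter_upwards [Ioo_mem_nhdsLT hm.2] with t ht
  have hincr := sub_le_sub_of_hasSum_of_monotoneOn
    (fun k => monotoneOn_div_const_sub (hw k) (hx k)) hf j hm ⟨hm.1.trans ht.1, ht.2⟩ ht.1.le
  linarith

lemma tendsto_nhdsGT_atBot_of_hasSum_div_sub (hw : ∀ k, 0 ≤ w k) {i : ι} (hi : 0 < w i)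
    {q : ℝ} (hq : x i < q) (hx : ∀ k, x k ∉ Ioo (x i) q)
    (hf : ∀ t ∈ Ioo (x i) q, HasSum (fun k => w k / (x k - t)) (f t) 𝓛) :
    Tendsto f (𝓝[>] x i) atBot := by
  obtain ⟨m, hm⟩ := nonempty_Ioo.2 hq
  refine tendsto_atBot_mono' _ ?_
    (tendsto_atBot_add_const_right _ (f m - w i / (x i - m))
      (tendsto_div_const_sub_nhdsGT_atBot hi _))
  filter_upwards [Ioo_mem_nhdsGT hm.1] with t ht
  have hincr := sub_le_sub_of_hasSum_of_monotoneOn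
    (fun k => monotoneOn_div_const_sub (hw k) (hx k)) hf i ⟨ht.1, ht.2.trans hm.2⟩ hm ht.2.le
  linarith

lemma surjOn_Ioo_of_hasSum_div_sub (hw : ∀ k, 0 ≤ w k) {i j : ι} (hi : 0 < w i) (hj : 0 < w j)
    (hij : x i < x j) (hx : ∀ k, x k ∉ Ioo (x i) (x j))
    (hf : ∀ t ∈ Ioo (x i) (x j), HasSum (fun k => w k / (x k - t)) (f t) 𝓛) :
    SurjOn f (Ioo (x i) (x j)) univ :=
  (continuousOn_of_hasSum_div_sub isOpen_Ioo hw hx hf).surjOn_of_tendsto (nonempty_Ioo.2 hij)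
    ((tendsto_comp_coe_Ioo_atBot hij).2 (tendsto_nhdsGT_atBot_of_hasSum_div_sub hw hi hij hx hf))
    ((tendsto_comp_coe_Ioo_atTop hij).2 (tendsto_nhdsLT_atTop_of_hasSum_div_sub hw hj hij hx hf))

end SumOfPoles

section SymmetricTruncation

variable {L : Set ℝ} (hL : ∀ a b : ℝ, (L ∩ Icc a b).Finite)

/-- Summation over a locally finite set `L ⊆ ℝ` in the sense of principal values: the partial sums
run over `L ∩ [-c, c]` as `c → ∞`. -/
noncomputable def symmetricTruncation : SummationFilter L where
  filter := atTop.map fun c : ℝ =>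
    ((hL (-c) c).preimage Subtype.val_injective.injOn).toFinset

instance : (symmetricTruncation hL).NeBot :=
  ⟨map_neBot⟩

instance : (symmetricTruncation hL).LeAtTop := by
  refine ⟨SummationFilter.support_eq_univ_iff.1 (eq_univ_of_forall fun l => ?_)⟩
  change ∀ᶠ s in atTop.map _, l ∈ s
  rw [eventually_map]
  filter_upwards [eventually_ge_atTop |(l : ℝ)|] with c hc
  simpa using abs_le.1 hc

lemma hasSum_symmetricTruncation_iff {M : Type*} [AddCommMonoid M] [TopologicalSpace M]
    {u : ℝ → M} {a : M} :
    HasSum (fun l : L => u l) a (symmetricTruncation hL) ↔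
      Tendsto (fun c : ℝ => ∑' l : ↥(L ∩ Icc (-c) c), u l) atTop (𝓝 a) := by
  refine tendsto_map'_iff.trans (tendsto_congr fun c => ?_)
  set F := ((hL (-c) c).preimage Subtype.val_injective.injOn).toFinset
  have hF : L ∩ Icc (-c) c = F.map (Function.Embedding.subtype (· ∈ L)) := by
    ext l
    simp [F]
  rw [hF, Finset.tsum_subtype', Finset.sum_map]
  rfl

end SymmetricTruncation

lemma im_eq_zero_of_hasSum_ofReal {ι : Type*} {𝓛 : SummationFilter ι} [𝓛.NeBot] {u : ι → ℝ}
    {z : ℂ} (h : HasSum (fun k => (u k : ℂ)) z 𝓛) : z.im = 0 :=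
  (Complex.hasSum_im h).unique (by simp)

theorem stieltjes_transform_strictMono_bijection_general {ι : Type*} {𝓛 : SummationFilter ι}
    [𝓛.NeBot] [𝓛.LeAtTop] {x w : ι → ℝ} (hw : ∀ k, 0 ≤ w k) {i j : ι} (hi : 0 < w i)
    (hj : 0 < w j) (hij : x i < x j) (hx : ∀ k, x k ∉ Ioo (x i) (x j)) {S : ℂ → ℂ}
    (hS : ∀ t ∈ Ioo (x i) (x j), HasSum (fun k => (w k : ℂ) / (x k - t)) (S t) 𝓛) :
    (∀ t ∈ Ioo (x i) (x j), (S (t : ℂ)).im = 0)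
      ∧ StrictMonoOn (fun t : ℝ => (S (t : ℂ)).re) (Ioo (x i) (x j))
      ∧ BijOn (fun t : ℝ => (S (t : ℂ)).re) (Ioo (x i) (x j)) univ := by
  have hofReal : ∀ t ∈ Ioo (x i) (x j),
      HasSum (fun k => ((w k / (x k - t) : ℝ) : ℂ)) (S t) 𝓛 := fun t ht => by
    exact_mod_cast hS t ht
  have hre : ∀ t ∈ Ioo (x i) (x j), HasSum (fun k => w k / (x k - t)) (S t).re 𝓛 :=
    fun t ht => Complex.hasSum_re (hofReal t ht)
  have hmono := strictMonoOn_of_hasSum_div_sub hw hx hre hi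
  exact ⟨fun t ht => im_eq_zero_of_hasSum_ofReal (hofReal t ht), hmono, mapsTo_univ _ _,
    hmono.injOn, surjOn_Ioo_of_hasSum_div_sub hw hi hj hij hx hre⟩

/-- Between two consecutive points `λ₁ < λ₂` of `L`, the Stieltjes transform `S_Λ`
is real-valued and is a strictly increasing bijection from `(λ₁, λ₂)` onto `ℝ`. -/
theorem stieltjes_transform_strictMono_bijection
    (L : Set ℝ) (γ : ℝ → ℝ)
    (hLfin : ∀ a b : ℝ, (L ∩ Set.Icc a b).Finite)
    (hγpos : ∀ l ∈ L, 0 < γ l)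
    (hgrowth : ∀ a b : ℝ,
      (fun x : ℝ => (∑' l : ↥(L ∩ Set.Icc 0 (x + a)), γ (l : ℝ))
          - (∑' l : ↥(L ∩ Set.Icc (-x + b) 0), γ (l : ℝ)))
        =O[atTop] (fun x : ℝ => x / (Real.log x) ^ 2))
    (S : ℂ → ℂ)
    (hS : ∀ z : ℂ, (∀ l ∈ L, z ≠ (l : ℂ)) →
      Tendsto
        (fun c : ℝ => ∑' l : ↥(L ∩ Set.Icc (-c) c),
          ((γ (l : ℝ) : ℂ) / (((l : ℝ) : ℂ) - z)))
        atTop (𝓝 (S z))) :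
    ∀ lam₁ lam₂ : ℝ, lam₁ ∈ L → lam₂ ∈ L → lam₁ < lam₂ →
      L ∩ Set.Ioo lam₁ lam₂ = ∅ →
      (∀ t ∈ Set.Ioo lam₁ lam₂, (S (t : ℂ)).im = 0)
      ∧ StrictMonoOn (fun t : ℝ => (S (t : ℂ)).re) (Set.Ioo lam₁ lam₂)
      ∧ Set.BijOn (fun t : ℝ => (S (t : ℂ)).re) (Set.Ioo lam₁ lam₂) Set.univ := by
  intro lam₁ lam₂ h₁ h₂ hlt hgap
  have hout : ∀ l ∈ L, l ∉ Ioo lam₁ lam₂ := fun l hl hl' => hgap.subset ⟨hl, hl'⟩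
  exact stieltjes_transform_strictMono_bijection_general (x := fun l : L => l)
    (i := ⟨lam₁, h₁⟩) (j := ⟨lam₂, h₂⟩) (fun l => (hγpos l l.2).le) (hγpos lam₁ h₁)
    (hγpos lam₂ h₂) hlt (fun l => hout l l.2) fun t ht =>
      (hasSum_symmetricTruncation_iff hLfin (u := fun l => (γ l : ℂ) / (l - t))).2
        (hS t fun l hl h => hout l hl (Complex.ofReal_injective h ▸ ht))
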